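/- arXiv:2307.00615 — 4 statements merged into one kernel-verified Lean document; each statement's English description precedes it below -/
import Mathlib

section
/- Let E be the diagonal V×V matrix with E_{ii} = d_i. Then E is invertible, and the matrix E·L·E⁻¹ is symmetric; explicitly, for i ≠ j, (E·L·E⁻¹)_{ij} = 1/(d_i + d_j) if i is adjacent to j, and (E·L·E⁻¹)_{ij} = 0 if i is not adjacent to j. -/
open Matrix BigOperators

/-- The influence matrix of a finite simple graph. -/
noncomputable def influenceMatrix {V : Type*} [Fintype V] [DecidableEq V]
    (G : SimpleGraph V) [DecidableRel G.Adj] : Matrix V V ℝ :=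
  Matrix.of fun i j =>
    if i = j then
      -∑ l ∈ G.neighborFinset i,
        ((G.degree l : ℝ) / (G.degree i : ℝ)) / ((G.degree i : ℝ) + (G.degree l : ℝ))
    else if G.Adj i j then
      ((G.degree j : ℝ) / (G.degree i : ℝ)) / ((G.degree i : ℝ) + (G.degree j : ℝ))
    else 0

/-- The inverse of a diagonal matrix with nonzero entries is the diagonal of the inverses. -/
theorem inv_diagonal_of_ne_zero {V K : Type*} [Fintype V] [DecidableEq V] [Field K]
    {d : V → K} (hd : ∀ i, d i ≠ 0) :
    (Matrix.diagonal d)⁻¹ = Matrix.diagonal fun i => (d i)⁻¹ := by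
  apply Matrix.inv_eq_right_inv
  simp [Matrix.diagonal_mul_diagonal, hd]

/-- With `E = diag(d_i)`, `E` is invertible and `E·L·E⁻¹` is symmetric, with off-diagonal
entries `1/(d_i+d_j)` for adjacent `i, j` and `0` for non-adjacent `i ≠ j`. -/
theorem influenceMatrix_conjugate_symmetric {V : Type*} [Fintype V] [DecidableEq V]
    (G : SimpleGraph V) [DecidableRel G.Adj]
    (hconn : G.Connected) (hcard : 2 ≤ Fintype.card V) :
    IsUnit (Matrix.diagonal fun i => (G.degree i : ℝ)) ∧
    ((Matrix.diagonal fun i => (G.degree i : ℝ)) * influenceMatrix G *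
        (Matrix.diagonal fun i => (G.degree i : ℝ))⁻¹).IsSymm ∧
    ∀ i j, i ≠ j →
      ((Matrix.diagonal fun i => (G.degree i : ℝ)) * influenceMatrix G *
          (Matrix.diagonal fun i => (G.degree i : ℝ))⁻¹) i j =
        if G.Adj i j then 1 / ((G.degree i : ℝ) + (G.degree j : ℝ)) else 0 := by
  have : Nontrivial V := Fintype.one_lt_card_iff_nontrivial.mp hcard
  have hd : ∀ i, (G.degree i : ℝ) ≠ 0 := fun i =>
    Nat.cast_ne_zero.mpr (hconn.preconnected.degree_pos_of_nontrivial i).ne'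
  have hentry : ∀ i j, i ≠ j →
      ((Matrix.diagonal fun i => (G.degree i : ℝ)) * influenceMatrix G *
          (Matrix.diagonal fun i => (G.degree i : ℝ))⁻¹) i j =
        if G.Adj i j then 1 / ((G.degree i : ℝ) + (G.degree j : ℝ)) else 0 := by
    intro i j hij
    rw [inv_diagonal_of_ne_zero hd, Matrix.mul_diagonal, Matrix.diagonal_mul]
    simp only [influenceMatrix, Matrix.of_apply, if_neg hij]
    split_ifs
    · have hi := hd i
      have hj := hd j
      field_simp
    · simp
  refine ⟨?_, ?_, hentry⟩
  · rw [Matrix.isUnit_diagonal, Pi.isUnit_iff]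
    exact fun i => (hd i).isUnit
  · refine Matrix.IsSymm.ext fun i j => ?_
    rcases eq_or_ne i j with rfl | hij
    · rfl
    · rw [hentry i j hij, hentry j i hij.symm, add_comm]
      exact if_congr (G.adj_comm j i) rfl rfl
end

section
/- The influence matrix L is diagonalizable over the reals: there exist an invertible real V×V matrix P and a diagonal real V×V matrix D such that L = P·D·P⁻¹, and moreover P and D can be chosen so that for some index c, the c-th column of P is the all-ones vector and D_{cc} = 0. -/
open Matrix BigOperators

/-- In an eigendecomposition `A = Q * D * Q⁻¹`, a suitable column of `Q` can be exchanged for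
any prescribed nonzero kernel vector of `A`. -/
lemma exists_eigendecomposition_with_kernel_column {n K : Type*} [Fintype n] [DecidableEq n]
    [Field K] {A Q : Matrix n n K} {d : n → K} (hQ : IsUnit Q) (hAQ : A * Q = Q * diagonal d)
    {v : n → K} (hv : v ≠ 0) (hAv : A *ᵥ v = 0) :
    ∃ (P : Matrix n n K) (c : n), IsUnit P ∧ A = P * diagonal d * P⁻¹ ∧
      (∀ i, P i c = v i) ∧ d c = 0 := by
  have hdet : IsUnit Q.det := (isUnit_iff_isUnit_det Q).1 hQ
  obtain ⟨y, rfl⟩ : ∃ y, v = Q *ᵥ y := ⟨Q⁻¹ *ᵥ v, by simp [mulVec_mulVec, mul_nonsing_inv _ hdet]⟩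
  have hy : y ≠ 0 := by
    rintro rfl
    simp at hv
  obtain ⟨c, hc⟩ := Function.ne_iff.1 hy
  have hdy : diagonal d *ᵥ y = 0 := by
    rw [mulVec_mulVec, hAQ, ← mulVec_mulVec] at hAv
    simpa [mulVec_mulVec, nonsing_inv_mul_cancel_left _ _ hdet] using congrArg (Q⁻¹ *ᵥ ·) hAv
  have hdc : d c = 0 := by
    have h := congrFun hdy c
    rw [mulVec_diagonal] at h
    exact (mul_eq_zero.1 h).resolve_right hc
  have hPdet : IsUnit (Q.updateCol c (Q *ᵥ y)).det := by
    rw [← cramer_apply, cramer_eq_adjugate_mulVec, mulVec_mulVec, adjugate_mul]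
    simpa [smul_mulVec] using ⟨hdet.ne_zero, hc⟩
  have hAP : A * Q.updateCol c (Q *ᵥ y) = Q.updateCol c (Q *ᵥ y) * diagonal d := by
    ext i j
    rw [mul_diagonal]
    by_cases hj : j = c
    · subst hj
      rw [hdc, mul_zero, mul_apply]
      simpa [mulVec, dotProduct] using congrFun hAv i
    · have h := congrFun (congrFun hAQ i) j
      rw [mul_diagonal, mul_apply] at h
      simpa [mul_apply, updateCol_ne hj] using h
  refine ⟨Q.updateCol c (Q *ᵥ y), c, (isUnit_iff_isUnit_det _).2 hPdet, ?_, by simp, hdc⟩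
  rw [← hAP, mul_nonsing_inv_cancel_right _ _ hPdet]

/-- A real matrix that becomes symmetric after conjugation by an invertible diagonal matrix has
an eigenbasis. -/
lemma exists_eigenbasis_of_symmetrizable {n : Type*} [Fintype n] [DecidableEq n]
    {A : Matrix n n ℝ} {w : n → ℝ} (hw : ∀ i, w i ≠ 0)
    (hA : (diagonal w * A * diagonal w⁻¹).IsHermitian) :
    ∃ (Q : Matrix n n ℝ) (d : n → ℝ), IsUnit Q ∧ A * Q = Q * diagonal d := by
  have hinv : diagonal w⁻¹ * diagonal w = 1 := by
    simp [diagonal_mul_diagonal, hw]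
  let U : Matrix n n ℝ := hA.eigenvectorUnitary
  have hU : IsUnit U := (Unitary.toUnits hA.eigenvectorUnitary).isUnit
  have hAU : diagonal w * A * diagonal w⁻¹ * U = U * diagonal hA.eigenvalues := by
    ext i j
    rw [mul_diagonal, mul_apply]
    simpa [U, mulVec, dotProduct, mul_comm] using congrFun (hA.mulVec_eigenvectorBasis j) i
  refine ⟨diagonal w⁻¹ * U, hA.eigenvalues, (IsUnit.of_mul_eq_one _ hinv).mul hU, ?_⟩
  rw [Matrix.mul_assoc, ← hAU]
  simp only [← Matrix.mul_assoc, hinv, Matrix.one_mul]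

lemma influenceMatrix_mulVec_one {V : Type*} [Fintype V] [DecidableEq V]
    (G : SimpleGraph V) [DecidableRel G.Adj] : influenceMatrix G *ᵥ 1 = 0 := by
  ext i
  simp only [mulVec, dotProduct, Pi.one_apply, mul_one, Pi.zero_apply]
  rw [← Finset.add_sum_erase _ _ (Finset.mem_univ i)]
  have hoff : ∑ j ∈ Finset.univ.erase i, influenceMatrix G i j = ∑ l ∈ G.neighborFinset i,
      ((G.degree l : ℝ) / (G.degree i : ℝ)) / ((G.degree i : ℝ) + (G.degree l : ℝ)) := by
    symm
    refine Finset.sum_subset_zero_on_sdiff (fun j hj => ?_) (fun j hj => ?_) (fun j hj => ?_)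
    · simpa using ((G.mem_neighborFinset i j).1 hj).ne'
    · have hne : i ≠ j := by grind
      have hadj : ¬ G.Adj i j := by simpa using (Finset.mem_sdiff.1 hj).2
      simp [influenceMatrix, hne, hadj]
    · have hadj := (G.mem_neighborFinset i j).1 hj
      simp [influenceMatrix, hadj.ne, hadj]
  rw [hoff]
  simp [influenceMatrix]

lemma influenceMatrix_symmetrizable {V : Type*} [Fintype V] [DecidableEq V]
    (G : SimpleGraph V) [DecidableRel G.Adj] (hdeg : ∀ i, (G.degree i : ℝ) ≠ 0) :
    (diagonal (fun i => (G.degree i : ℝ)) * influenceMatrix G *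
      diagonal (fun i => (G.degree i : ℝ))⁻¹).IsHermitian := by
  refine IsHermitian.ext fun i j => ?_
  rw [mul_diagonal, mul_diagonal, diagonal_mul, diagonal_mul, star_trivial]
  by_cases hij : i = j
  · rw [hij]
  by_cases hadj : G.Adj i j
  · simp only [influenceMatrix, of_apply, hij, Ne.symm hij, hadj, hadj.symm, if_true, if_false,
      Pi.inv_apply]
    have hi := hdeg i
    have hj := hdeg j
    field_simp
    rw [add_comm]
  · have hadj' : ¬ G.Adj j i := fun h => hadj h.symm
    simp [influenceMatrix, hij, Ne.symm hij, hadj, hadj']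

/-- The influence matrix is diagonalizable over `ℝ`: `L = P·D·P⁻¹` with `P` invertible
and `D` diagonal; moreover one can take some column `c` of `P` to be the all-ones vector
with corresponding diagonal entry `D c c = 0`. -/
theorem influenceMatrix_diagonalizable {V : Type*} [Fintype V] [DecidableEq V]
    (G : SimpleGraph V) [DecidableRel G.Adj]
    (hconn : G.Connected) (hcard : 2 ≤ Fintype.card V) :
    ∃ (P D : Matrix V V ℝ), IsUnit P ∧ D.IsDiag ∧
      influenceMatrix G = P * D * P⁻¹ ∧
      ∃ c : V, (∀ i, P i c = 1) ∧ D c c = 0 := by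
  have : Nontrivial V := Fintype.one_lt_card_iff_nontrivial.1 hcard
  have hdeg : ∀ i, (G.degree i : ℝ) ≠ 0 := fun i =>
    Nat.cast_ne_zero.2 (hconn.preconnected.degree_pos_of_nontrivial i).ne'
  obtain ⟨Q, d, hQ, hLQ⟩ :=
    exists_eigenbasis_of_symmetrizable hdeg (influenceMatrix_symmetrizable G hdeg)
  obtain ⟨P, c, hP, hL, hPc, hdc⟩ := exists_eigendecomposition_with_kernel_column hQ hLQ
    one_ne_zero (influenceMatrix_mulVec_one G)
  exact ⟨P, diagonal d, hP, isDiag_diagonal d, hL, c, hPc, by simpa using hdc⟩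
end

section
/- (Gautschi's inequality) For every real number x > 0 and every real number s with 0 < s < 1, one has x^{1-s} < Γ(x+1)/Γ(x+s) < (x+1)^{1-s}, where Γ denotes the Gamma function. -/
open Real in
/-- Log-convexity of `Γ` between `y` and `y + 1`. -/
lemma Gamma_add_mul_rpow_le {y s : ℝ} (hy : 0 < y) (hs0 : 0 < s) (hs1 : s < 1) :
    Gamma (y + s) * y ^ (1 - s) ≤ Gamma (y + 1) := by
  have hG := Gamma_pos_of_pos hy
  have h := Gamma_mul_add_mul_le_rpow_Gamma_mul_rpow_Gamma (s := y) (t := y + 1)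
    (a := 1 - s) (b := s) hy (by linarith) (by linarith) hs0 (by ring)
  rw [show (1 - s) * y + s * (y + 1) = y + s by ring, Gamma_add_one hy.ne',
    mul_rpow hy.le hG.le] at h
  have hGs : Gamma y ^ (1 - s) * Gamma y ^ s = Gamma y := by
    rw [← rpow_add hG, sub_add_cancel, rpow_one]
  have hys : y ^ s * y ^ (1 - s) = y := by
    rw [← rpow_add hy, add_sub_cancel, rpow_one]
  calc Gamma (y + s) * y ^ (1 - s)
      ≤ Gamma y ^ (1 - s) * (y ^ s * Gamma y ^ s) * y ^ (1 - s) := by gcongr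
    _ = (y ^ s * y ^ (1 - s)) * (Gamma y ^ (1 - s) * Gamma y ^ s) := by ring
    _ = Gamma (y + 1) := by rw [hGs, hys, Gamma_add_one hy.ne']

/-- Strict weighted AM-GM inequality for `x` and `x + 1`. -/
lemma rpow_mul_add_one_rpow_lt {x s : ℝ} (hx : 0 < x) (hs0 : 0 < s) (hs1 : s < 1) :
    x ^ (1 - s) * (x + 1) ^ s < x + s := by
  have h : (1 + x⁻¹) ^ s < 1 + s * x⁻¹ :=
    rpow_one_add_lt_one_add_mul_self (by linarith [inv_pos.2 hx]) (inv_pos.2 hx).ne' hs0 hs1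
  calc x ^ (1 - s) * (x + 1) ^ s = x ^ (1 - s) * (x * (1 + x⁻¹)) ^ s := by
        rw [mul_add, mul_one, mul_inv_cancel₀ hx.ne']
    _ = x * (1 + x⁻¹) ^ s := by
        rw [Real.mul_rpow hx.le (by positivity), ← mul_assoc, ← Real.rpow_add hx,
          sub_add_cancel, Real.rpow_one]
    _ < x * (1 + s * x⁻¹) := by gcongr
    _ = x + s := by field_simp

/-- Gautschi's inequality: for `x > 0` and `0 < s < 1`,
`x^(1-s) < Γ(x+1)/Γ(x+s) < (x+1)^(1-s)`. -/
theorem gautschi_inequality (x s : ℝ) (hx : 0 < x) (hs0 : 0 < s) (hs1 : s < 1) :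
    x ^ (1 - s) < Real.Gamma (x + 1) / Real.Gamma (x + s) ∧
    Real.Gamma (x + 1) / Real.Gamma (x + s) < (x + 1) ^ (1 - s) := by
  have hxs : 0 < x + s := by linarith
  have hx1 : 0 < x + 1 := by linarith
  have hG : 0 < Real.Gamma (x + s) := Real.Gamma_pos_of_pos hxs
  rw [lt_div_iff₀ hG, div_lt_iff₀ hG]
  constructor
  · have h := Gamma_add_mul_rpow_le hx1 hs0 hs1
    rw [add_right_comm, Real.Gamma_add_one hxs.ne', Real.Gamma_add_one hx1.ne'] at h
    have hpow : (x + 1) ^ s * (x + 1) ^ (1 - s) = x + 1 := by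
      rw [← Real.rpow_add hx1, add_sub_cancel, Real.rpow_one]
    refine lt_of_mul_lt_mul_left ?_ hx1.le
    calc (x + 1) * (x ^ (1 - s) * Real.Gamma (x + s))
        = (x ^ (1 - s) * (x + 1) ^ s) * Real.Gamma (x + s) * (x + 1) ^ (1 - s) := by
          linear_combination (-(x ^ (1 - s) * Real.Gamma (x + s))) * hpow
      _ < (x + s) * Real.Gamma (x + s) * (x + 1) ^ (1 - s) := by
          gcongr
          exact rpow_mul_add_one_rpow_lt hx hs0 hs1
      _ ≤ (x + 1) * Real.Gamma (x + 1) := h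
  · have h := Gamma_add_mul_rpow_le (s := 1 - s) hxs (by linarith) (by linarith)
    rw [show x + s + (1 - s) = x + 1 by ring, sub_sub_cancel, Real.Gamma_add_one hxs.ne'] at h
    have hpow : (x + s) ^ (1 - s) * (x + s) ^ s = x + s := by
      rw [← Real.rpow_add hxs, sub_add_cancel, Real.rpow_one]
    calc Real.Gamma (x + 1) ≤ (x + s) ^ (1 - s) * Real.Gamma (x + s) := by
          refine le_of_mul_le_mul_right (h.trans_eq ?_) (Real.rpow_pos_of_pos hxs s)
          linear_combination (-Real.Gamma (x + s)) * hpow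
      _ < (x + 1) ^ (1 - s) * Real.Gamma (x + s) := by
          gcongr
end

section
/- For every real number λ with 0 < λ < 1 and all integers j, t with 1 ≤ j ≤ t, one has ((j-1)/(t+1))^λ ≤ ∏_{k=j}^{t} (1 - λ/k) ≤ (j/t)^λ. -/
open BigOperators

theorem sub_one_div_rpow_le_one_sub_div {lam x : ℝ} (h0 : 0 ≤ lam) (h1 : lam ≤ 1)
    (hx : 1 ≤ x) : ((x - 1) / x) ^ lam ≤ 1 - lam / x := by
  have hx0 : 0 < x := by linarith
  have hs : -1 ≤ -(1 / x) := neg_le_neg ((div_le_one hx0).2 hx)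
  calc ((x - 1) / x) ^ lam = (1 + -(1 / x)) ^ lam := by
        congr 1
        field_simp
        ring
    _ ≤ 1 + lam * -(1 / x) := rpow_one_add_le_one_add_mul_self hs h0 h1
    _ = 1 - lam / x := by ring

theorem one_sub_div_le_div_add_one_rpow {lam x : ℝ} (h0 : 0 ≤ lam) (h1 : lam ≤ 1)
    (hx : 0 < x) : 1 - lam / x ≤ (x / (x + 1)) ^ lam := by
  have hpos : 0 < (1 + 1 / x) ^ lam := by positivity
  have hle : (1 + 1 / x) ^ lam ≤ 1 + lam * (1 / x) :=
    rpow_one_add_le_one_add_mul_self (by linarith [one_div_pos.2 hx]) h0 h1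
  have hinv : x / (x + 1) = (1 + 1 / x)⁻¹ := by
    field_simp
  rw [hinv, Real.inv_rpow (by positivity)]
  calc 1 - lam / x ≤ (1 + lam * (1 / x))⁻¹ := by
        rw [← one_div, le_div_iff₀ (by positivity)]
        have : (1 - lam / x) * (1 + lam * (1 / x)) = 1 - (lam / x) ^ 2 := by ring
        nlinarith [sq_nonneg (lam / x)]
    _ ≤ ((1 + 1 / x) ^ lam)⁻¹ := inv_anti₀ hpos hle

theorem sub_one_div_rpow_le_prod_one_sub_div {lam : ℝ} (h0 : 0 ≤ lam) (h1 : lam ≤ 1)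
    {j t : ℕ} (hj : 1 ≤ j) (hjt : j ≤ t) :
    (((j : ℝ) - 1) / (t : ℝ)) ^ lam ≤ ∏ k ∈ Finset.Icc j t, (1 - lam / (k : ℝ)) := by
  have hj' : (1 : ℝ) ≤ j := by exact_mod_cast hj
  induction t, hjt using Nat.le_induction with
  | base => simpa using sub_one_div_rpow_le_one_sub_div h0 h1 hj'
  | succ t hjt ih =>
    have ht : (1 : ℝ) ≤ t := by exact_mod_cast hj.trans hjt
    rw [Finset.prod_Icc_succ_top (by omega)]
    have hstep := sub_one_div_rpow_le_one_sub_div h0 h1 (x := ((t + 1 : ℕ) : ℝ))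
      (by push_cast; linarith)
    have hbase : 0 ≤ ((j : ℝ) - 1) / t := div_nonneg (by linarith) (by linarith)
    calc (((j : ℝ) - 1) / ((t + 1 : ℕ) : ℝ)) ^ lam
        = (((j : ℝ) - 1) / t) ^ lam * ((((t + 1 : ℕ) : ℝ) - 1) / ((t + 1 : ℕ) : ℝ)) ^ lam := by
          rw [← Real.mul_rpow hbase (by push_cast; simp; positivity)]
          congr 1
          push_cast
          field_simp
          ring
      _ ≤ _ := mul_le_mul ih hstep (Real.rpow_nonneg (by push_cast; simp; positivity) _)
          ((Real.rpow_nonneg hbase _).trans ih)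

theorem prod_one_sub_div_le_div_add_one_rpow {lam : ℝ} (h0 : 0 ≤ lam) (h1 : lam ≤ 1)
    {j t : ℕ} (hj : 1 ≤ j) (hjt : j ≤ t) :
    ∏ k ∈ Finset.Icc j t, (1 - lam / (k : ℝ)) ≤ ((j : ℝ) / ((t : ℝ) + 1)) ^ lam := by
  have hj' : (1 : ℝ) ≤ j := by exact_mod_cast hj
  induction t, hjt using Nat.le_induction with
  | base => simpa using one_sub_div_le_div_add_one_rpow h0 h1 (by linarith : (0 : ℝ) < j)
  | succ t hjt ih =>
    rw [Finset.prod_Icc_succ_top (by omega)]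
    have hstep := one_sub_div_le_div_add_one_rpow h0 h1 (x := ((t + 1 : ℕ) : ℝ)) (by positivity)
    have hfactor : 0 ≤ 1 - lam / ((t + 1 : ℕ) : ℝ) := by
      rw [sub_nonneg, div_le_one (by positivity)]
      push_cast
      linarith [(Nat.cast_nonneg t : (0 : ℝ) ≤ t)]
    calc _ ≤ ((j : ℝ) / ((t : ℝ) + 1)) ^ lam *
          (((t + 1 : ℕ) : ℝ) / (((t + 1 : ℕ) : ℝ) + 1)) ^ lam :=
          mul_le_mul ih hstep hfactor (by positivity)
      _ = ((j : ℝ) / (((t + 1 : ℕ) : ℝ) + 1)) ^ lam := by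
          rw [← Real.mul_rpow (by positivity) (by positivity)]
          congr 1
          push_cast
          field_simp

/-- For `0 < λ < 1` and integers `1 ≤ j ≤ t`,
`((j-1)/(t+1))^λ ≤ ∏_{k=j}^{t} (1 - λ/k) ≤ (j/t)^λ`. -/
theorem prod_one_sub_div_bounds (lam : ℝ) (hlam0 : 0 < lam) (hlam1 : lam < 1)
    (j t : ℕ) (hj : 1 ≤ j) (hjt : j ≤ t) :
    (((j : ℝ) - 1) / ((t : ℝ) + 1)) ^ lam ≤ ∏ k ∈ Finset.Icc j t, (1 - lam / (k : ℝ)) ∧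
    ∏ k ∈ Finset.Icc j t, (1 - lam / (k : ℝ)) ≤ ((j : ℝ) / (t : ℝ)) ^ lam := by
  have hj' : (0 : ℝ) ≤ (j : ℝ) - 1 := sub_nonneg.2 (by exact_mod_cast hj)
  have ht : (0 : ℝ) < t := by exact_mod_cast hj.trans hjt
  have hle : (t : ℝ) ≤ t + 1 := by linarith
  constructor
  · refine le_trans ?_ (sub_one_div_rpow_le_prod_one_sub_div hlam0.le hlam1.le hj hjt)
    exact Real.rpow_le_rpow (by positivity) (div_le_div_of_nonneg_left hj' ht hle) hlam0.le
  · refine (prod_one_sub_div_le_div_add_one_rpow hlam0.le hlam1.le hj hjt).trans ?_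
    exact Real.rpow_le_rpow (by positivity)
      (div_le_div_of_nonneg_left (Nat.cast_nonneg j) ht hle) hlam0.le
end
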